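/- With the setup of ≤_O: for w, w' ∈ W(I,J,K), the following are equivalent: (i) w' <_O w; (ii) there exist u ∈ Min(w) and u' in the coset w' W_K W_{I,J} with u' < u in Bruhat order; (iii) for every u ∈ Min(w), there exists u' in w' W_K W_{I,J} with u' < u. -/

import Mathlib

section BruhatSetup

variable {B : Type*} {W : Type*} [Group W] {M : CoxeterMatrix B}

/-- Strong Bruhat order: `u ≤ v` iff every reduced word for `v` has a sublist
that is a reduced word for `u`. -/
def BruhatLE (cs : CoxeterSystem M W) (u v : W) : Prop :=
  ∀ ω : List B, cs.IsReduced ω → cs.wordProd ω = v →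
    ∃ ω' : List B, List.Sublist ω' ω ∧ cs.IsReduced ω' ∧ cs.wordProd ω' = u

/-- Strict strong Bruhat order. -/
def BruhatLT (cs : CoxeterSystem M W) (u v : W) : Prop :=
  BruhatLE cs u v ∧ u ≠ v

/-- The standard parabolic subgroup `W_L` generated by the simple reflections in `L`. -/
def parab (cs : CoxeterSystem M W) (L : Set B) : Subgroup W :=
  Subgroup.closure (cs.simple '' L)

/-- The set `W^L` of minimal length coset representatives for `W / W_L`. -/
def minReps (cs : CoxeterSystem M W) (L : Set B) : Set W :=
  {w : W | ∀ i ∈ L, cs.length w < cs.length (w * cs.simple i)}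

/-- Right weak order: `v ≤_R w` iff `ℓ(w) = ℓ(w v⁻¹) + ℓ(v)`. -/
def leR (cs : CoxeterSystem M W) (v w : W) : Prop :=
  cs.length w = cs.length (w * v⁻¹) + cs.length v

/-- The setup of the order `≤_O`: `I`, `J`, `K` are pairwise disjoint and pairwise
disconnected subsets of the simple system (so that `W_{I∪J∪K} = W_I × W_J × W_K`),
and `σ : x ↦ x*` restricts to an isomorphism of Coxeter groups `W_I → W_J`
(a bijective group homomorphism sending simple reflections to simple reflections). -/
structure GoodSetup (cs : CoxeterSystem M W) (I J K : Set B) (σ : W → W) : Prop where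
  disjIJ : Disjoint I J
  disjIK : Disjoint I K
  disjJK : Disjoint J K
  commIJ : ∀ i ∈ I, ∀ j ∈ J, Commute (cs.simple i) (cs.simple j)
  commIK : ∀ i ∈ I, ∀ k ∈ K, Commute (cs.simple i) (cs.simple k)
  commJK : ∀ j ∈ J, ∀ k ∈ K, Commute (cs.simple j) (cs.simple k)
  directProd : ∀ x ∈ parab cs I, ∀ y ∈ parab cs J, ∀ z ∈ parab cs K,
    x * y * z = 1 → x = 1 ∧ y = 1 ∧ z = 1
  mulSigma : ∀ x ∈ parab cs I, ∀ y ∈ parab cs I, σ (x * y) = σ x * σ y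
  bijSigma : Set.BijOn σ (parab cs I : Set W) (parab cs J : Set W)
  simpleSigma : ∀ i ∈ I, ∃ j ∈ J, σ (cs.simple i) = cs.simple j

/-- Membership in the coset `[w] = w · W_K · W_{I,J}` where `W_{I,J} = {x x* : x ∈ W_I}`. -/
def inCoset (cs : CoxeterSystem M W) (I K : Set B) (σ : W → W) (w u : W) : Prop :=
  ∃ a ∈ parab cs K, ∃ x ∈ parab cs I, u = w * a * (x * σ x)

/-- The relation `≤_O`: `w' ≤_O w` iff some `u ∈ [w']` satisfies `u ≤ w` in Bruhat order. -/
def leO (cs : CoxeterSystem M W) (I K : Set B) (σ : W → W) (w' w : W) : Prop :=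
  ∃ u, inCoset cs I K σ w' u ∧ BruhatLE cs u w

/-- The strict relation associated to `≤_O`. -/
def ltO (cs : CoxeterSystem M W) (I K : Set B) (σ : W → W) (w' w : W) : Prop :=
  leO cs I K σ w' w ∧ w' ≠ w

/-- `Min(w)`: the elements of the coset `[w]` of length `ℓ(w)`. -/
def MinC (cs : CoxeterSystem M W) (I K : Set B) (σ : W → W) (w : W) : Set W :=
  {u : W | inCoset cs I K σ w u ∧ cs.length u = cs.length w}

/-- The set `M` of all elements having minimal length in their coset mod `W_K W_{I,J}`. -/
def Mset (cs : CoxeterSystem M W) (I J K : Set B) (σ : W → W) : Set W :=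
  {u : W | ∃ w ∈ minReps cs (J ∪ K), u ∈ MinC cs I K σ w}

open Classical in
/-- The action of a simple generator on pairs (element, sign). -/
noncomputable def flipMap (cs : CoxeterSystem M W) (i : B) : Function.End (W × ZMod 2) :=
  fun p => (cs.simple i * p.1 * cs.simple i, p.2 + if p.1 = cs.simple i then 1 else 0)

open Classical in
lemma flip_pow (cs : CoxeterSystem M W) (i j : B) (k : ℕ) (t : W) (e : ZMod 2) :
    ((flipMap cs i * flipMap cs j) ^ k) (t, e) =
      ((cs.simple i * cs.simple j) ^ k * t * ((cs.simple i * cs.simple j) ^ k)⁻¹,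
        e + ∑ n ∈ Finset.range (2 * k),
          if t = cs.simple j * (cs.simple i * cs.simple j) ^ n then 1 else 0) := by
  induction k with
  | zero => simp; rfl
  | succ k ih =>
    have hc : ∀ r : ℕ, ((cs.simple i * cs.simple j) ^ r)⁻¹ * cs.simple j
        = cs.simple j * (cs.simple i * cs.simple j) ^ r := by
      intro r
      have h1 : SemiconjBy (cs.simple j) (cs.simple i * cs.simple j)
          (cs.simple i * cs.simple j)⁻¹ := by
        simp [SemiconjBy, mul_assoc]
      have := h1.pow_right r
      rw [SemiconjBy] at this
      rw [this, inv_pow]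
    set c := cs.simple i * cs.simple j with hcdef
    have e1 : (c ^ k * t * (c ^ k)⁻¹ = cs.simple j) ↔ t = cs.simple j * c ^ (2 * k) := by
      rw [two_mul, pow_add, ← mul_assoc, ← hc, mul_inv_eq_iff_eq_mul, mul_assoc,
        eq_inv_mul_iff_mul_eq]
    have e2 : (cs.simple j * (c ^ k * t * (c ^ k)⁻¹) * cs.simple j = cs.simple i) ↔
        t = cs.simple j * c ^ (2 * k + 1) := by
      have : cs.simple j * c ^ (2 * k + 1)
          = (c ^ k)⁻¹ * (cs.simple j * cs.simple i * cs.simple j) * c ^ k := by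
        rw [show 2 * k + 1 = k + (1 + k) by ring, pow_add, pow_add, ← mul_assoc, ← hc, pow_one, hcdef]
        simp only [mul_assoc]
      rw [this]
      constructor
      · intro h
        rw [← h]
        simp [mul_assoc]
      · intro h
        rw [h]
        simp [mul_assoc]
    rw [pow_succ', show ((flipMap cs i * flipMap cs j) * (flipMap cs i * flipMap cs j) ^ k) (t, e)
      = flipMap cs i (flipMap cs j (((flipMap cs i * flipMap cs j) ^ k) (t, e))) from rfl, ih]
    simp only [flipMap, e1, e2]
    ext
    · simp only [pow_succ', mul_inv_rev]
      simp [hcdef, mul_assoc]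
    · rw [show 2 * (k + 1) = 2 * k + 1 + 1 by ring, Finset.sum_range_succ, Finset.sum_range_succ]
      simp only [add_assoc]

lemma flip_liftable (cs : CoxeterSystem M W) : M.IsLiftable (flipMap cs) := by
  classical
  intro i j
  funext p
  obtain ⟨t, e⟩ := p
  rw [flip_pow, cs.simple_mul_simple_pow, two_mul, Finset.sum_range_add]
  simp only [pow_add, cs.simple_mul_simple_pow, one_mul, CharTwo.add_self_eq_zero]
  simp
  rfl

/-- The reflection cocycle representation. -/
noncomputable def flipHom (cs : CoxeterSystem M W) : W →* Function.End (W × ZMod 2) :=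
  cs.lift ⟨flipMap cs, flip_liftable cs⟩

lemma flipHom_simple (cs : CoxeterSystem M W) (i : B) :
    flipHom cs (cs.simple i) = flipMap cs i := cs.lift_apply_simple _ _

open Classical in
lemma flipHom_word (cs : CoxeterSystem M W) (ω : List B) (t : W) (e : ZMod 2) :
    flipHom cs (cs.wordProd ω) (t, e) =
      (cs.wordProd ω * t * (cs.wordProd ω)⁻¹, e + ((cs.rightInvSeq ω).count t : ZMod 2)) := by
  induction ω with
  | nil => simp; rfl
  | cons i ω ih =>
    rw [cs.wordProd_cons, map_mul, show (flipHom cs (cs.simple i) * flipHom cs (cs.wordProd ω)) (t, e)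
      = flipHom cs (cs.simple i) (flipHom cs (cs.wordProd ω) (t, e)) from rfl, ih, flipHom_simple]
    simp only [flipMap]
    have : (cs.wordProd ω * t * (cs.wordProd ω)⁻¹ = cs.simple i) ↔
        ((cs.wordProd ω)⁻¹ * cs.simple i * cs.wordProd ω = t) := by
      constructor
      · intro h
        rw [← h]
        simp [mul_assoc]
      · intro h
        rw [← h]
        simp [mul_assoc]
    ext
    · simp [mul_assoc]
    · simp only [this, CoxeterSystem.rightInvSeq, List.count_cons, beq_iff_eq]
      push_cast
      ring

lemma flipHom_snd (cs : CoxeterSystem M W) (w t : W) (e : ZMod 2) :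
    flipHom cs w (t, e) = (w * t * w⁻¹, e + (flipHom cs w (t, 0)).2) := by
  obtain ⟨ω, rfl⟩ := cs.wordProd_surjective w
  rw [flipHom_word, flipHom_word]
  simp

lemma flipHom_refl (cs : CoxeterSystem M W) {t : W} (ht : cs.IsReflection t) (e : ZMod 2) :
    flipHom cs t (t, e) = (t, e + 1) := by
  obtain ⟨v, i, rfl⟩ := ht
  set t := v * cs.simple i * v⁻¹ with htd
  have h0 : ∀ e, flipHom cs v (flipHom cs v⁻¹ (t, e)) = (t, e) := by
    intro e
    rw [show flipHom cs v (flipHom cs v⁻¹ (t, e)) = (flipHom cs v * flipHom cs v⁻¹) (t, e) from rfl,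
      ← map_mul]
    simp
    rfl
  have h1 : flipHom cs t (t, e) =
      flipHom cs v (flipHom cs (cs.simple i) (flipHom cs v⁻¹ (t, e))) := by
    rw [show flipHom cs v (flipHom cs (cs.simple i) (flipHom cs v⁻¹ (t, e)))
      = (flipHom cs v * flipHom cs (cs.simple i) * flipHom cs v⁻¹) (t, e) from rfl,
      ← map_mul, ← map_mul]
  have h2 := h0 e
  rw [h1, flipHom_snd cs v⁻¹ t e]
  rw [flipHom_snd cs v⁻¹ t e] at h2
  have h3 : v⁻¹ * t * v⁻¹⁻¹ = cs.simple i := by simp [htd, mul_assoc]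
  rw [h3] at h2 ⊢
  rw [flipHom_simple]
  simp only [flipMap]
  rw [flipHom_snd] at h2 ⊢
  rw [Prod.mk.injEq] at h2
  ext
  · simp [htd]
  · simp only [if_true, cs.simple_mul_simple_self, one_mul]
    linear_combination h2.2

lemma strong_exch (cs : CoxeterSystem M W) {t : W} (ht : cs.IsReflection t) (ω : List B)
    (hl : cs.length (cs.wordProd ω * t) < cs.length (cs.wordProd ω)) :
    t ∈ cs.rightInvSeq ω := by
  classical
  by_contra hn
  obtain ⟨η, hη, he⟩ := cs.exists_isReduced (cs.wordProd ω * t)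
  have h1 : flipHom cs (cs.wordProd ω * t) (t, 0) = flipHom cs (cs.wordProd ω) (t, 1) := by
    rw [map_mul, show (flipHom cs (cs.wordProd ω) * flipHom cs t) (t, 0) =
      flipHom cs (cs.wordProd ω) (flipHom cs t (t, 0)) from rfl, flipHom_refl cs ht]
    simp
  rw [he, flipHom_word, flipHom_word, List.count_eq_zero_of_not_mem hn] at h1
  have h2 := congrArg Prod.snd h1
  simp only at h2
  have h3 : t ∈ cs.rightInvSeq η := by
    by_contra h4
    rw [List.count_eq_zero_of_not_mem h4] at h2
    simp at h2
  have h5 := (cs.isRightInversion_of_mem_rightInvSeq hη h3).2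
  rw [← he, mul_assoc, ht.mul_self, mul_one] at h5
  omega

/-- Strong exchange: a length-decreasing reflection deletes a letter of any word. -/
lemma strong_exch_erase (cs : CoxeterSystem M W) {t : W} (ht : cs.IsReflection t) (ω : List B)
    (hl : cs.length (cs.wordProd ω * t) < cs.length (cs.wordProd ω)) :
    ∃ j < ω.length, cs.wordProd ω * t = cs.wordProd (ω.eraseIdx j) := by
  obtain ⟨j, hj, rfl⟩ := List.mem_iff_getElem.mp (strong_exch cs ht ω hl)
  refine ⟨j, by simpa using hj, ?_⟩
  rw [← cs.wordProd_mul_getD_rightInvSeq, List.getD_eq_getElem]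

/-- Every word has a reduced sublist with the same product. -/
lemma exists_red_sub (cs : CoxeterSystem M W) (ω : List B) :
    ∃ ω' : List B, List.Sublist ω' ω ∧ cs.IsReduced ω' ∧ cs.wordProd ω' = cs.wordProd ω := by
  induction ω using List.reverseRecOn with
  | nil => exact ⟨[], List.Sublist.refl _, by simp [CoxeterSystem.IsReduced], rfl⟩
  | append_singleton ω i ih =>
    obtain ⟨η, hs, hr, hp⟩ := ih
    rcases cs.length_mul_simple (cs.wordProd η) i with hl | hl
    · refine ⟨η ++ [i], hs.append (List.Sublist.refl _), ?_, ?_⟩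
      · rw [CoxeterSystem.IsReduced, cs.wordProd_append, cs.wordProd_singleton, hl, hr.eq]; simp
      · rw [cs.wordProd_append, cs.wordProd_append, hp]
    · obtain ⟨j, hj, he⟩ := strong_exch_erase cs (cs.isReflection_simple i) η (by omega)
      refine ⟨η.eraseIdx j, ((List.eraseIdx_sublist ..).trans hs).trans (List.sublist_append_left _ _), ?_, ?_⟩
      · rw [CoxeterSystem.IsReduced, ← he, List.length_eraseIdx_of_lt hj, ← hr.eq]; omega
      · rw [← he, hp, cs.wordProd_append, cs.wordProd_singleton]

/-- One upward step in the Bruhat graph. -/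
def bstep (cs : CoxeterSystem M W) (x y : W) : Prop :=
  ∃ t, cs.IsReflection t ∧ x = y * t ∧ cs.length x < cs.length y

lemma chain_sub (cs : CoxeterSystem M W) {x y : W} (hc : Relation.ReflTransGen (bstep cs) x y)
    (ω : List B) (hω : cs.wordProd ω = y) :
    ∃ ω' : List B, List.Sublist ω' ω ∧ cs.wordProd ω' = x := by
  induction hc using Relation.ReflTransGen.head_induction_on with
  | refl => exact ⟨ω, List.Sublist.refl _, hω⟩
  | head hs _ ih =>
    obtain ⟨η, h1, rfl⟩ := ih
    obtain ⟨t, ht, rfl, hl⟩ := hs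
    obtain ⟨j, hj, he⟩ := strong_exch_erase cs ht η hl
    exact ⟨η.eraseIdx j, (List.eraseIdx_sublist ..).trans h1, he.symm⟩

lemma bstep_lift (cs : CoxeterSystem M W) {x y : W} (i : B) (hs : bstep cs x y) :
    Relation.ReflTransGen (bstep cs) (x * cs.simple i) (y * cs.simple i) ∨
      Relation.ReflTransGen (bstep cs) (x * cs.simple i) y := by
  obtain ⟨t, ht, rfl, hl⟩ := hs
  have ht' : cs.IsReflection (cs.simple i * t * cs.simple i) := by
    simpa using ht.conj (cs.simple i)
  have heq : y * t * cs.simple i = y * cs.simple i * (cs.simple i * t * cs.simple i) := by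
    simp [mul_assoc]
  by_cases hlt : cs.length (y * t * cs.simple i) < cs.length (y * cs.simple i)
  · exact Or.inl (Relation.ReflTransGen.single ⟨_, ht', heq, hlt⟩)
  · right
    have hne := ht'.length_mul_left_ne (y * cs.simple i)
    rw [← heq] at hne
    have hx := cs.length_mul_simple (y * t) i
    have hy := cs.length_mul_simple y i
    have hy' : cs.length (y * cs.simple i) + 1 = cs.length y := by omega
    obtain ⟨η, hη, he⟩ := cs.exists_isReduced (y * cs.simple i)
    have hyw : cs.wordProd (η ++ [i]) = y := by
      rw [cs.wordProd_append, ← he]; simp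
    obtain ⟨j, hj, hje⟩ := strong_exch_erase cs ht (η ++ [i]) (by rw [hyw]; exact hl)
    rw [hyw] at hje
    have hlen : cs.length (y * cs.simple i) = η.length := by rw [he, hη.eq]
    by_cases hjl : j < η.length
    · rw [List.eraseIdx_append_of_lt_length hjl, cs.wordProd_append] at hje
      have : y * t * cs.simple i = cs.wordProd (η.eraseIdx j) := by rw [hje]; simp
      have h2 := cs.length_wordProd_le (η.eraseIdx j)
      rw [← this, List.length_eraseIdx_of_lt hjl] at h2
      omega
    · have hj2 : j = η.length := by simp at hj; omega
      rw [List.eraseIdx_append_of_length_le (by omega), hj2] at hje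
      simp at hje
      rw [← he] at hje
      rw [hje]
      have : y * t * cs.simple i = y := by rw [hje]; simp
      simp
      exact Relation.ReflTransGen.refl

lemma chain_lift (cs : CoxeterSystem M W) {x y : W} (i : B)
    (hc : Relation.ReflTransGen (bstep cs) x y) :
    Relation.ReflTransGen (bstep cs) (x * cs.simple i) (y * cs.simple i) ∨
      Relation.ReflTransGen (bstep cs) (x * cs.simple i) y := by
  induction hc using Relation.ReflTransGen.head_induction_on with
  | refl => exact Or.inl Relation.ReflTransGen.refl
  | head hs hr ih =>
    rcases bstep_lift cs i hs with h | h
    · rcases ih with h' | h'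
      · exact Or.inl (h.trans h')
      · exact Or.inr (h.trans h')
    · exact Or.inr (h.trans hr)

lemma sub_chain (cs : CoxeterSystem M W) (ω : List B) :
    ∀ ω' : List B, cs.IsReduced ω → List.Sublist ω' ω →
      Relation.ReflTransGen (bstep cs) (cs.wordProd ω') (cs.wordProd ω) := by
  induction ω using List.reverseRecOn with
  | nil =>
    intro ω' _ hs
    rw [List.sublist_nil.mp hs]
  | append_singleton ω i ih =>
    intro ω' hr hs
    have hr0 : cs.IsReduced ω := by simpa using hr.take ω.length
    have hup : Relation.ReflTransGen (bstep cs) (cs.wordProd ω) (cs.wordProd (ω ++ [i])) := by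
      refine Relation.ReflTransGen.single ⟨cs.simple i, cs.isReflection_simple i, ?_, ?_⟩
      · rw [cs.wordProd_append]; simp
      · rw [hr.eq, hr0.eq]; simp
    obtain ⟨α, β, rfl, ha, hb⟩ := List.sublist_append_iff.mp hs
    have hα := ih α hr0 ha
    rcases List.sublist_singleton.mp hb with rfl | rfl
    · simpa using hα.trans hup
    · rcases chain_lift cs i hα with h | h
      · simpa [cs.wordProd_append] using h
      · have := h.trans hup
        simpa [cs.wordProd_append] using this

/-- The subword property. -/
lemma bruhat_of_sub (cs : CoxeterSystem M W) {ω ω' : List B} (hr : cs.IsReduced ω)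
    (hs : List.Sublist ω' ω) : BruhatLE cs (cs.wordProd ω') (cs.wordProd ω) := by
  intro η _ hη
  obtain ⟨ξ, h1, h2⟩ := chain_sub cs (sub_chain cs ω ω' hr hs) η hη
  obtain ⟨ζ, h3, h4, h5⟩ := exists_red_sub cs ξ
  exact ⟨ζ, h3.trans h1, h4, h5.trans h2⟩

lemma parab_mono (cs : CoxeterSystem M W) {L L' : Set B} (hL : L ⊆ L') :
    parab cs L ≤ parab cs L' := Subgroup.closure_mono (Set.image_mono hL)

lemma word_mem_parab (cs : CoxeterSystem M W) {L : Set B} (ω : List B) (hω : ∀ i ∈ ω, i ∈ L) :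
    cs.wordProd ω ∈ parab cs L := by
  induction ω with
  | nil => simp
  | cons i ω ih =>
    rw [cs.wordProd_cons]
    exact (parab cs L).mul_mem (Subgroup.subset_closure ⟨i, hω i (by simp), rfl⟩)
      (ih fun j hj => hω j (by simp [hj]))

lemma parab_word (cs : CoxeterSystem M W) {L : Set B} {x : W} (hx : x ∈ parab cs L) :
    ∃ ω : List B, (∀ i ∈ ω, i ∈ L) ∧ cs.IsReduced ω ∧ cs.wordProd ω = x := by
  have : ∃ ω : List B, (∀ i ∈ ω, i ∈ L) ∧ cs.wordProd ω = x := by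
    refine Subgroup.closure_induction (p := fun x _ => ∃ ω : List B, (∀ i ∈ ω, i ∈ L) ∧ cs.wordProd ω = x)
      ?_ ?_ ?_ ?_ hx
    · rintro _ ⟨i, hi, rfl⟩
      exact ⟨[i], by simpa using hi, by simp⟩
    · exact ⟨[], by simp, by simp⟩
    · rintro _ _ _ _ ⟨α, ha, rfl⟩ ⟨β, hb, rfl⟩
      refine ⟨α ++ β, ?_, cs.wordProd_append _ _⟩
      intro i hi
      rcases List.mem_append.mp hi with hi | hi
      · exact ha i hi
      · exact hb i hi
    · rintro _ _ ⟨α, ha, rfl⟩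
      exact ⟨α.reverse, by simpa using ha, by simp⟩
  obtain ⟨ω, h1, rfl⟩ := this
  obtain ⟨η, h2, h3, h4⟩ := exists_red_sub cs ω
  exact ⟨η, fun i hi => h1 i (h2.subset hi), h3, h4⟩

lemma minRep_len_add (cs : CoxeterSystem M W) {L : Set B} {v : W}
    (hv : ∀ y ∈ parab cs L, cs.length v ≤ cs.length (v * y)) {y : W} (hy : y ∈ parab cs L) :
    cs.length (v * y) = cs.length v + cs.length y := by
  obtain ⟨ω, hω, rfl⟩ := cs.exists_isReduced v
  obtain ⟨η, hL, hη, rfl⟩ := parab_word cs hy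
  obtain ⟨ζ, h1, h2, h3⟩ := exists_red_sub cs (ω ++ η)
  obtain ⟨α, β, rfl, ha, hb⟩ := List.sublist_append_iff.mp h1
  have hβ : cs.wordProd β ∈ parab cs L := word_mem_parab cs β fun i hi => hL i (hb.subset hi)
  rw [cs.wordProd_append, cs.wordProd_append] at h3
  have h4 := hv (cs.wordProd η * (cs.wordProd β)⁻¹) ((parab cs L).mul_mem hy ((parab cs L).inv_mem hβ))
  have h5 : cs.wordProd ω * (cs.wordProd η * (cs.wordProd β)⁻¹) = cs.wordProd α := by
    rw [← mul_assoc, ← h3]; simp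
  rw [h5, hω.eq] at h4
  have h6 := cs.length_wordProd_le α
  have h7 : α = ω := ha.eq_of_length (le_antisymm ha.length_le (by omega))
  subst h7
  have h8 : cs.wordProd β = cs.wordProd η := mul_left_cancel h3
  have h9 := cs.length_wordProd_le β
  have h10 := h2.eq
  rw [cs.wordProd_append, h3, List.length_append] at h10
  have h11 := cs.length_mul_le (cs.wordProd α) (cs.wordProd η)
  rw [h8] at h9
  rw [hω.eq] at *
  omega

lemma exists_min (cs : CoxeterSystem M W) (L : Set B) (w : W) :
    ∃ v y, y ∈ parab cs L ∧ w = v * y ∧ ∀ z ∈ parab cs L, cs.length v ≤ cs.length (v * z) := by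
  classical
  have hex : ∃ n, ∃ y ∈ parab cs L, cs.length (w * y) = n := ⟨_, 1, (parab cs L).one_mem, rfl⟩
  obtain ⟨y, hy, hn⟩ := Nat.find_spec hex
  refine ⟨w * y, y⁻¹, (parab cs L).inv_mem hy, by simp, fun z hz => ?_⟩
  rw [hn]
  exact Nat.find_min' hex ⟨y * z, (parab cs L).mul_mem hy hz, by rw [mul_assoc]⟩

lemma minReps_min (cs : CoxeterSystem M W) {L : Set B} {w : W} (hw : w ∈ minReps cs L) :
    ∀ y ∈ parab cs L, cs.length w ≤ cs.length (w * y) := by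
  obtain ⟨v, y, hy, rfl, hv⟩ := exists_min cs L w
  obtain ⟨η, hL, hη, rfl⟩ := parab_word cs hy
  rcases List.eq_nil_or_concat η with rfl | ⟨η, i, rfl⟩
  · simpa using hv
  · exfalso
    rw [List.concat_eq_append] at *
    have hi : i ∈ L := hL i (by simp)
    have h1 := hw i hi
    have h2 := minRep_len_add cs hv hy
    have h3 : v * cs.wordProd (η ++ [i]) * cs.simple i = v * cs.wordProd η := by
      rw [cs.wordProd_append]; simp [mul_assoc]
    rw [h3, h2, hη.eq] at h1
    have h4 := cs.length_mul_le v (cs.wordProd η)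
    have h5 := cs.length_wordProd_le η
    simp at h1
    omega

lemma comm_parab (cs : CoxeterSystem M W) {I J : Set B}
    (hc : ∀ i ∈ I, ∀ j ∈ J, Commute (cs.simple i) (cs.simple j)) {x y : W}
    (hx : x ∈ parab cs I) (hy : y ∈ parab cs J) : x * y = y * x := by
  have h1 : parab cs J ≤ Subgroup.centralizer (parab cs I : Set W) := by
    rw [parab, Subgroup.closure_le]
    rintro _ ⟨j, hj, rfl⟩
    have h2 : parab cs I ≤ Subgroup.centralizer {cs.simple j} := by
      rw [parab, Subgroup.closure_le]
      rintro _ ⟨i, hi, rfl⟩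
      simp only [SetLike.mem_coe, Subgroup.mem_centralizer_singleton_iff]
      exact (hc i hi j hj).eq
    rw [SetLike.mem_coe, Subgroup.mem_centralizer_iff]
    intro g hg
    exact (Subgroup.mem_centralizer_singleton_iff.mp (h2 hg))
  exact Subgroup.mem_centralizer_iff.mp (h1 hy) x hx

section Good

variable {cs : CoxeterSystem M W} {I J K : Set B} {σ : W → W}

lemma good_len (h : GoodSetup cs I J K σ) {x y a : W} (hx : x ∈ parab cs I) (hy : y ∈ parab cs J)
    (ha : a ∈ parab cs K) :
    cs.length (x * y * a) = cs.length x + cs.length y + cs.length a := by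
  obtain ⟨α, hα, rα, rfl⟩ := parab_word cs hx
  obtain ⟨β, hβ, rβ, rfl⟩ := parab_word cs hy
  obtain ⟨γ, hγ, rγ, rfl⟩ := parab_word cs ha
  obtain ⟨ζ, h1, h2, h3⟩ := exists_red_sub cs (α ++ β ++ γ)
  obtain ⟨ζ', γ', rfl, h4, hc⟩ := List.sublist_append_iff.mp h1
  obtain ⟨α', β', rfl, ha', hb⟩ := List.sublist_append_iff.mp h4
  have mα : cs.wordProd α' ∈ parab cs I := word_mem_parab cs _ fun i hi => hα i (ha'.subset hi)
  have mβ : cs.wordProd β' ∈ parab cs J := word_mem_parab cs _ fun i hi => hβ i (hb.subset hi)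
  have mγ : cs.wordProd γ' ∈ parab cs K := word_mem_parab cs _ fun i hi => hγ i (hc.subset hi)
  have hlen := h2.eq
  simp only [cs.wordProd_append] at h3 hlen
  rw [h3] at hlen
  have l1 := cs.length_wordProd_le α'
  have l2 := cs.length_wordProd_le β'
  have l3 := cs.length_wordProd_le γ'
  set x := cs.wordProd α
  set y := cs.wordProd β
  set a := cs.wordProd γ
  set x' := cs.wordProd α'
  set y' := cs.wordProd β'
  set a' := cs.wordProd γ'
  have key : (x'⁻¹ * x) * (y * y'⁻¹) * (a * a'⁻¹) = 1 := by
    have e1 : a * a'⁻¹ * y'⁻¹ = y'⁻¹ * (a * a'⁻¹) :=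
      (comm_parab cs h.commJK ((parab cs J).inv_mem mβ)
        ((parab cs K).mul_mem ha ((parab cs K).inv_mem mγ))).symm
    calc (x'⁻¹ * x) * (y * y'⁻¹) * (a * a'⁻¹) = x'⁻¹ * x * y * (y'⁻¹ * (a * a'⁻¹)) := by group
      _ = x'⁻¹ * (x * y * a) * a'⁻¹ * y'⁻¹ := by rw [← e1]; group
      _ = 1 := by rw [← h3]; group
  obtain ⟨k1, k2, k3⟩ := h.directProd _ ((parab cs I).mul_mem ((parab cs I).inv_mem mα) hx)
    _ ((parab cs J).mul_mem hy ((parab cs J).inv_mem mβ))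
    _ ((parab cs K).mul_mem ha ((parab cs K).inv_mem mγ)) key
  have k1' : x' = x := inv_mul_eq_one.mp k1
  have k2' : y = y' := mul_inv_eq_one.mp k2
  have k3' : a = a' := mul_inv_eq_one.mp k3
  have u1 := cs.length_mul_le (x * y) a
  have u2 := cs.length_mul_le x y
  rw [k1'] at l1
  rw [← k2'] at l2
  rw [← k3'] at l3
  simp only [List.length_append] at hlen
  omega

lemma sigma_one (h : GoodSetup cs I J K σ) : σ 1 = 1 := by
  have := h.mulSigma 1 (parab cs I).one_mem 1 (parab cs I).one_mem
  simpa using this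

lemma sigma_inv (h : GoodSetup cs I J K σ) {x : W} (hx : x ∈ parab cs I) : σ x⁻¹ = (σ x)⁻¹ := by
  have := h.mulSigma x hx x⁻¹ ((parab cs I).inv_mem hx)
  rw [mul_inv_cancel, sigma_one h] at this
  exact (inv_eq_of_mul_eq_one_right this.symm).symm

lemma sigma_mem (h : GoodSetup cs I J K σ) {x : W} (hx : x ∈ parab cs I) : σ x ∈ parab cs J :=
  h.bijSigma.mapsTo hx

lemma simple_mem {L : Set B} {i : B} (hi : i ∈ L) : cs.simple i ∈ parab cs L :=
  Subgroup.subset_closure ⟨i, hi, rfl⟩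

lemma sigma_word (h : GoodSetup cs I J K σ) {f : B → B}
    (hf : ∀ i ∈ I, f i ∈ J ∧ σ (cs.simple i) = cs.simple (f i)) (ω : List B)
    (hω : ∀ i ∈ ω, i ∈ I) : σ (cs.wordProd ω) = cs.wordProd (ω.map f) := by
  induction ω with
  | nil => simpa using sigma_one h
  | cons i ω ih =>
    have hω' : ∀ j ∈ ω, j ∈ I := fun j hj => hω j (by simp [hj])
    rw [List.map_cons, cs.wordProd_cons, cs.wordProd_cons,
      h.mulSigma _ (simple_mem (hω i (by simp))) _ (word_mem_parab cs ω hω'), ih hω',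
      (hf i (hω i (by simp))).2]

lemma exists_f (h : GoodSetup cs I J K σ) :
    ∃ f : B → B, ∀ i ∈ I, f i ∈ J ∧ σ (cs.simple i) = cs.simple (f i) := by
  classical
  choose! f hf using h.simpleSigma
  exact ⟨f, hf⟩

lemma sigma_len_le (h : GoodSetup cs I J K σ) {x : W} (hx : x ∈ parab cs I) :
    cs.length (σ x) ≤ cs.length x := by
  obtain ⟨f, hf⟩ := exists_f h
  obtain ⟨ω, hω, rω, rfl⟩ := parab_word cs hx
  rw [sigma_word h hf ω hω, rω.eq]
  simpa using cs.length_wordProd_le (ω.map f)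

lemma simple_lift (h : GoodSetup cs I J K σ) {j : B} (hj : j ∈ J) :
    ∃ i ∈ I, σ (cs.simple i) = cs.simple j := by
  obtain ⟨f, hf⟩ := exists_f h
  obtain ⟨x, hx, hxj⟩ := h.bijSigma.surjOn (simple_mem hj : cs.simple j ∈ parab cs J)
  obtain ⟨ω, hω, rω, rfl⟩ := parab_word cs hx
  rw [sigma_word h hf ω hω] at hxj
  obtain ⟨ζ, h1, h2, h3⟩ := exists_red_sub cs (ω.map f)
  have h4 := h2.eq
  rw [h3, hxj, cs.length_simple] at h4
  obtain ⟨k, rfl⟩ := List.length_eq_one_iff.mp h4.symm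
  have hk : k ∈ ω.map f := h1.subset (by simp)
  obtain ⟨i, hi, rfl⟩ := List.mem_map.mp hk
  refine ⟨i, hω i hi, ?_⟩
  rw [(hf i (hω i hi)).2, ← hxj, ← h3]
  simp

lemma sigma_len (h : GoodSetup cs I J K σ) {x : W} (hx : x ∈ parab cs I) :
    cs.length (σ x) = cs.length x := by
  refine le_antisymm (sigma_len_le h hx) ?_
  have key : ∀ η : List B, (∀ j ∈ η, j ∈ J) → ∃ ω : List B, (∀ i ∈ ω, i ∈ I) ∧
      ω.length = η.length ∧ σ (cs.wordProd ω) = cs.wordProd η := by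
    intro η
    induction η with
    | nil => intro _; exact ⟨[], by simp, rfl, by simpa using sigma_one h⟩
    | cons j η ih =>
      intro hη
      obtain ⟨ω, h1, h2, h3⟩ := ih fun k hk => hη k (by simp [hk])
      obtain ⟨i, hi, hij⟩ := simple_lift h (hη j (by simp))
      refine ⟨i :: ω, ?_, by simp [h2], ?_⟩
      · intro k hk
        rcases List.mem_cons.mp hk with rfl | hk
        · exact hi
        · exact h1 k hk
      · rw [cs.wordProd_cons, cs.wordProd_cons, h.mulSigma _ (simple_mem hi) _ (word_mem_parab cs ω h1),
          h3, hij]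
  obtain ⟨η, hη, rη, he⟩ := parab_word cs (sigma_mem h hx)
  obtain ⟨ω, h1, h2, h3⟩ := key η hη
  have : cs.wordProd ω = x := h.bijSigma.injOn (word_mem_parab cs ω h1) hx (by rw [h3, he])
  rw [← this, h3, rη.eq, ← h2]
  exact cs.length_wordProd_le ω

lemma parab_union_decomp (h : GoodSetup cs I J K σ) {g : W} (hg : g ∈ parab cs (I ∪ (J ∪ K))) :
    ∃ x ∈ parab cs I, ∃ y ∈ parab cs J, ∃ a ∈ parab cs K, g = x * y * a := by
  obtain ⟨ω, hω, -, rfl⟩ := parab_word cs hg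
  induction ω with
  | nil => exact ⟨1, one_mem _, 1, one_mem _, 1, one_mem _, by simp⟩
  | cons i ω ih =>
    have hω' : ∀ j ∈ ω, j ∈ I ∪ (J ∪ K) := fun j hj => hω j (by simp [hj])
    obtain ⟨x, hx, y, hy, a, ha, he⟩ := ih hω' (word_mem_parab cs ω hω')
    rw [cs.wordProd_cons, he]
    rcases hω i (by simp) with hi | hi | hi
    · exact ⟨cs.simple i * x, mul_mem (simple_mem hi) hx, y, hy, a, ha, by group⟩
    · refine ⟨x, hx, cs.simple i * y, mul_mem (simple_mem hi) hy, a, ha, ?_⟩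
      have := comm_parab cs h.commIJ hx (simple_mem hi)
      rw [← mul_assoc x, this]; group
    · refine ⟨x, hx, y, hy, cs.simple i * a, mul_mem (simple_mem hi) ha, ?_⟩
      have h1 := comm_parab cs h.commIK hx (simple_mem hi)
      have h2 := comm_parab cs h.commJK hy (simple_mem hi)
      calc cs.simple i * (x * y * a) = (cs.simple i * x) * y * a := by group
        _ = x * (cs.simple i * y) * a := by rw [← h1]; group
        _ = _ := by rw [← h2]; group

/-- Length formula in a coset, relative to a minimal representative. -/
lemma coset_len (h : GoodSetup cs I J K σ) {w : W} (hw : w ∈ minReps cs (J ∪ K)) :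
    ∃ v x₀, x₀ ∈ parab cs I ∧ w = v * x₀ ∧
      ∀ x ∈ parab cs I, ∀ y ∈ parab cs J, ∀ a ∈ parab cs K,
        cs.length (v * (x * y * a)) = cs.length v + (cs.length x + cs.length y + cs.length a) := by
  obtain ⟨v, g, hg, rfl, hv⟩ := exists_min cs (I ∪ (J ∪ K)) w
  have hI : parab cs I ≤ parab cs (I ∪ (J ∪ K)) := parab_mono cs (by grind)
  have hJ : parab cs J ≤ parab cs (I ∪ (J ∪ K)) := parab_mono cs (by grind)
  have hK : parab cs K ≤ parab cs (I ∪ (J ∪ K)) := parab_mono cs (by grind)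
  have hJ' : parab cs J ≤ parab cs (J ∪ K) := parab_mono cs (by grind)
  have hK' : parab cs K ≤ parab cs (J ∪ K) := parab_mono cs (by grind)
  have form : ∀ x ∈ parab cs I, ∀ y ∈ parab cs J, ∀ a ∈ parab cs K,
        cs.length (v * (x * y * a)) = cs.length v + (cs.length x + cs.length y + cs.length a) := by
    intro x hx y hy a ha
    rw [minRep_len_add cs hv (mul_mem (mul_mem (hI hx) (hJ hy)) (hK ha)), good_len h hx hy ha]
  obtain ⟨x, hx, y, hy, a, ha, rfl⟩ := parab_union_decomp h hg
  have h1 := minReps_min cs hw (a⁻¹ * y⁻¹) (mul_mem (inv_mem (hK' ha)) (inv_mem (hJ' hy)))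
  have h2 := form x hx 1 (one_mem _) 1 (one_mem _)
  have e : v * (x * y * a) * (a⁻¹ * y⁻¹) = v * (x * 1 * 1) := by group
  rw [e, form x hx y hy a ha, h2] at h1
  simp only [cs.length_one] at h1
  have y1 : y = 1 := cs.length_eq_zero_iff.mp (by omega)
  have a1 : a = 1 := cs.length_eq_zero_iff.mp (by omega)
  exact ⟨v, x, hx, by simp [y1, a1], form⟩

lemma coset_min (h : GoodSetup cs I J K σ) {w : W} (hw : w ∈ minReps cs (J ∪ K)) {a x : W}
    (ha : a ∈ parab cs K) (hx : x ∈ parab cs I) :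
    cs.length w ≤ cs.length (w * a * (x * σ x)) ∧
    (cs.length (w * a * (x * σ x)) = cs.length w →
      a = 1 ∧ cs.length (w * x) + cs.length x = cs.length w) := by
  obtain ⟨v, x₀, hx₀, rfl, form⟩ := coset_len h hw
  have hs := sigma_mem h hx
  have e1 : v * x₀ * a * (x * σ x) = v * ((x₀ * x) * σ x * a) := by
    have c1 := comm_parab cs h.commIK hx ha
    have c2 := comm_parab cs h.commJK hs ha
    calc v * x₀ * a * (x * σ x) = v * x₀ * (a * x) * σ x := by group
      _ = v * x₀ * x * (a * σ x) := by rw [← c1]; group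
      _ = _ := by rw [← c2]; group
  have f1 := form (x₀ * x) (mul_mem hx₀ hx) (σ x) hs a ha
  have f2 := form x₀ hx₀ 1 (one_mem _) 1 (one_mem _)
  have f3 := form (x₀ * x) (mul_mem hx₀ hx) 1 (one_mem _) 1 (one_mem _)
  simp only [mul_one, cs.length_one, add_zero] at f2 f3
  rw [← mul_assoc] at f3
  rw [sigma_len h hx] at f1
  have f4 := cs.length_le_length_mul_add_right x₀ x
  rw [e1]
  refine ⟨by omega, fun he => ⟨cs.length_eq_zero_iff.mp (by omega), by omega⟩⟩

lemma coset_mul (h : GoodSetup cs I J K σ) {w u x : W} (hu : inCoset cs I K σ w u)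
    (hx : x ∈ parab cs I) : inCoset cs I K σ w (u * (x * σ x)) := by
  obtain ⟨a, ha, z, hz, rfl⟩ := hu
  refine ⟨a, ha, z * x, mul_mem hz hx, ?_⟩
  have := comm_parab cs h.commIJ hx (sigma_mem h hz)
  rw [h.mulSigma z hz x hx]
  calc w * a * (z * σ z) * (x * σ x) = w * a * z * (σ z * x) * σ x := by group
    _ = _ := by rw [← this]; group

lemma coset_unique (h : GoodSetup cs I J K σ) {w w' : W} (hw : w ∈ minReps cs (J ∪ K))
    (hw' : w' ∈ minReps cs (J ∪ K)) {u : W} (hu : inCoset cs I K σ w u)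
    (hu' : inCoset cs I K σ w' u) : w' = w := by
  have key : ∀ {w₁ w₂ : W}, inCoset cs I K σ w₁ u → inCoset cs I K σ w₂ u →
      inCoset cs I K σ w₂ w₁ := by
    rintro w₁ w₂ ⟨a, ha, x, hx, he⟩ h2
    have h3 := coset_mul h h2 (inv_mem hx)
    have c := comm_parab cs h.commIJ hx (sigma_mem h hx)
    have e : u * (x⁻¹ * σ x⁻¹) = w₁ * a := by
      rw [he, sigma_inv h hx, c]; group
    rw [e] at h3
    obtain ⟨b, hb, y, hy, hbe⟩ := h3
    refine ⟨b * a⁻¹, mul_mem hb (inv_mem ha), y, hy, ?_⟩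
    have c1 := comm_parab cs h.commIK hy (inv_mem ha)
    have c2 := comm_parab cs h.commJK (sigma_mem h hy) (inv_mem ha)
    calc w₁ = w₁ * a * a⁻¹ := by group
      _ = w₂ * b * y * (σ y * a⁻¹) := by rw [hbe]; group
      _ = w₂ * b * (y * a⁻¹) * σ y := by rw [c2]; group
      _ = _ := by rw [c1]; group
  have m1 := key hu hu'
  have m2 := key hu' hu
  obtain ⟨b, hb, y, hy, hbe⟩ := m2
  have l2 := (coset_min h hw hb hy).1
  rw [← hbe] at l2
  obtain ⟨a, ha, x, hx, he⟩ := m1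
  have l1 := coset_min h hw' ha hx
  rw [← he] at l1
  obtain ⟨a1, l3⟩ := l1.2 (le_antisymm l2 l1.1)
  have hJ' : parab cs J ≤ parab cs (J ∪ K) := parab_mono cs (by grind)
  have l4 := minReps_min cs hw (σ x)⁻¹ (inv_mem (hJ' (sigma_mem h hx)))
  have e : w * (σ x)⁻¹ = w' * x := by rw [he, a1]; group
  rw [e] at l4
  have x1 : x = 1 := cs.length_eq_zero_iff.mp (by have := l1.1; omega)
  rw [he, a1, x1, sigma_one h]
  simp

lemma transfer_down (h : GoodSetup cs I J K σ) {p x u : W} (hx : x ∈ parab cs I)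
    (h2 : cs.length (p * (σ x)⁻¹) = cs.length p + cs.length x)
    (hle : BruhatLE cs u (p * x)) (h1 : cs.length (p * x) = cs.length p + cs.length x) :
    ∃ z ∈ parab cs I, BruhatLE cs (u * (z * σ z)) (p * (σ x)⁻¹) := by
  obtain ⟨f, hf⟩ := exists_f h
  obtain ⟨ω, rω, rfl⟩ := cs.exists_isReduced p
  obtain ⟨ξ, hξ, rξ, rfl⟩ := parab_word cs hx
  rw [sigma_word h hf ξ hξ, ← cs.wordProd_reverse, ← cs.wordProd_append] at h2 ⊢
  rw [← cs.wordProd_append] at h1 hle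
  rw [rω.eq, rξ.eq] at h1 h2
  obtain ⟨ζ, hs, -, rfl⟩ := hle (ω ++ ξ) (by simp [CoxeterSystem.IsReduced, h1]) rfl
  obtain ⟨α, β, rfl, ha, hb⟩ := List.sublist_append_iff.mp hs
  have hβ : ∀ i ∈ β, i ∈ I := fun i hi => hξ i (hb.subset hi)
  have mβ := word_mem_parab cs β hβ
  refine ⟨(cs.wordProd β)⁻¹, inv_mem mβ, ?_⟩
  have := bruhat_of_sub cs (ω := ω ++ (ξ.map f).reverse) (ω' := α ++ (β.map f).reverse)
    (by simp [CoxeterSystem.IsReduced, h2]) (ha.append (hb.map f).reverse)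
  convert this using 1
  rw [cs.wordProd_append, cs.wordProd_append, cs.wordProd_reverse, ← sigma_word h hf β hβ,
    sigma_inv h mβ]
  group

lemma transfer_up (h : GoodSetup cs I J K σ) {p x u : W} (hx : x ∈ parab cs I)
    (h2 : cs.length (p * (σ x)⁻¹) = cs.length p + cs.length x)
    (hle : BruhatLE cs u (p * (σ x)⁻¹)) (h1 : cs.length (p * x) = cs.length p + cs.length x) :
    ∃ z ∈ parab cs I, BruhatLE cs (u * (z * σ z)) (p * x) := by
  obtain ⟨f, hf⟩ := exists_f h
  obtain ⟨ω, rω, rfl⟩ := cs.exists_isReduced p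
  obtain ⟨ξ, hξ, rξ, rfl⟩ := parab_word cs hx
  rw [sigma_word h hf ξ hξ, ← cs.wordProd_reverse, ← cs.wordProd_append] at h2 hle
  rw [← cs.wordProd_append] at h1 ⊢
  rw [rω.eq, rξ.eq] at h1 h2
  obtain ⟨ζ, hs, -, rfl⟩ := hle (ω ++ (ξ.map f).reverse) (by simp [CoxeterSystem.IsReduced, h2]) rfl
  obtain ⟨α, γ, rfl, ha, hb⟩ := List.sublist_append_iff.mp hs
  rw [← List.map_reverse] at hb
  obtain ⟨β', hb', rfl⟩ := List.sublist_map_iff.mp hb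
  obtain ⟨β, rfl⟩ : ∃ β, β' = β.reverse := ⟨β'.reverse, by simp⟩
  have hb2 : List.Sublist β ξ := List.reverse_sublist.mp hb'
  have hβ : ∀ i ∈ β, i ∈ I := fun i hi => hξ i (hb2.subset hi)
  have mβ := word_mem_parab cs β hβ
  refine ⟨cs.wordProd β, mβ, ?_⟩
  have := bruhat_of_sub cs (ω := ω ++ ξ) (ω' := α ++ β)
    (by simp [CoxeterSystem.IsReduced, h1]) (ha.append hb2)
  convert this using 1
  rw [cs.wordProd_append, cs.wordProd_append, List.map_reverse, cs.wordProd_reverse,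
    ← sigma_word h hf β hβ, comm_parab cs h.commIJ mβ (sigma_mem h mβ)]
  group

lemma minC_form (h : GoodSetup cs I J K σ) {w u : W} (hw : w ∈ minReps cs (J ∪ K))
    (hu : u ∈ MinC cs I K σ w) : ∃ p x, x ∈ parab cs I ∧ w = p * x ∧ u = p * (σ x)⁻¹ ∧
      cs.length (p * x) = cs.length p + cs.length x ∧
      cs.length (p * (σ x)⁻¹) = cs.length p + cs.length x := by
  obtain ⟨⟨a, ha, x, hx, rfl⟩, hl⟩ := hu
  obtain ⟨rfl, h2⟩ := (coset_min h hw ha hx).2 hl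
  rw [mul_one] at hl ⊢
  refine ⟨w * x, x⁻¹, inv_mem hx, by simp, by rw [sigma_inv h hx]; group, ?_, ?_⟩
  · rw [cs.length_inv, mul_inv_cancel_right, h2]
  · rw [cs.length_inv, sigma_inv h hx, inv_inv, mul_assoc, hl, h2]

lemma lt_len {u v : W} (hlt : BruhatLT cs u v) : cs.length u < cs.length v := by
  obtain ⟨ω, rω, rfl⟩ := cs.exists_isReduced v
  obtain ⟨η, hs, rη, rfl⟩ := hlt.1 ω rω rfl
  rw [rω.eq, rη.eq]
  refine lt_of_le_of_ne hs.length_le fun he => hlt.2 ?_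
  rw [hs.eq_of_length he]

lemma dir_one_three (h : GoodSetup cs I J K σ) {w w' : W}
    (hw : w ∈ minReps cs (J ∪ K)) (hw' : w' ∈ minReps cs (J ∪ K)) (hlt : ltO cs I K σ w' w) :
    ∀ u ∈ MinC cs I K σ w, ∃ u', inCoset cs I K σ w' u' ∧ BruhatLT cs u' u := by
  intro u hu
  have huc := hu.1
  obtain ⟨p, x, hx, rfl, rfl, h1, h2⟩ := minC_form h hw hu
  obtain ⟨⟨u₀, hc, hle⟩, hne⟩ := hlt
  obtain ⟨z, hz, hz'⟩ := transfer_down h hx h2 hle h1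
  have hc' := coset_mul h hc hz
  refine ⟨_, hc', hz', fun he => hne ?_⟩
  rw [he] at hc'
  exact coset_unique h hw hw' huc hc'

lemma dir_two_one (h : GoodSetup cs I J K σ) {w w' : W}
    (hw : w ∈ minReps cs (J ∪ K))
    (hex : ∃ u ∈ MinC cs I K σ w, ∃ u', inCoset cs I K σ w' u' ∧ BruhatLT cs u' u) :
    ltO cs I K σ w' w := by
  obtain ⟨u, hu, u', hc, hlt⟩ := hex
  have hul := hu.2
  refine ⟨?_, ?_⟩
  · obtain ⟨p, x, hx, rfl, rfl, h1, h2⟩ := minC_form h hw hu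
    obtain ⟨z, hz, hz'⟩ := transfer_up h hx h2 hlt.1 h1
    exact ⟨_, coset_mul h hc hz, hz'⟩
  · rintro rfl
    have l1 := lt_len hlt
    obtain ⟨a, ha, x, hx, rfl⟩ := hc
    have := (coset_min h hw ha hx).1
    omega

lemma self_minC (h : GoodSetup cs I J K σ) (w : W) : w ∈ MinC cs I K σ w :=
  ⟨⟨1, one_mem _, 1, one_mem _, by simp [sigma_one h]⟩, rfl⟩

end Good

theorem statement_13 (cs : CoxeterSystem M W) (I J K : Set B) (σ : W → W)
    (h : GoodSetup cs I J K σ) (w w' : W)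
    (hw : w ∈ minReps cs (J ∪ K)) (hw' : w' ∈ minReps cs (J ∪ K)) :
    (ltO cs I K σ w' w ↔
      ∃ u ∈ MinC cs I K σ w, ∃ u', inCoset cs I K σ w' u' ∧ BruhatLT cs u' u) ∧
    (ltO cs I K σ w' w ↔
      ∀ u ∈ MinC cs I K σ w, ∃ u', inCoset cs I K σ w' u' ∧ BruhatLT cs u' u) := by
  have h13 := dir_one_three h hw hw'
  have h21 := dir_two_one (w' := w') h hw
  have h32 : (∀ u ∈ MinC cs I K σ w, ∃ u', inCoset cs I K σ w' u' ∧ BruhatLT cs u' u) →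
      ∃ u ∈ MinC cs I K σ w, ∃ u', inCoset cs I K σ w' u' ∧ BruhatLT cs u' u :=
    fun h3 => ⟨w, self_minC h w, h3 w (self_minC h w)⟩
  exact ⟨⟨fun h1 => h32 (h13 h1), h21⟩, ⟨h13, fun h3 => h21 (h32 h3)⟩⟩

end BruhatSetup
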